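/- Let θ be a ℂ-algebra automorphism of V = Ǔ^{≥0}_{r,s}(sl_3). Then there exist a permutation σ of {1, 2} and scalars a_1, a_2 ∈ ℂ^* such that θ(K_l) = a_l K_{σ(l)} for l = 1, 2. -/

import Mathlib

/-!
The algebra `V` embeds into a quantum torus by the Feigin homomorphism `E₁ ↦ x₁ + x₃`, `E₂ ↦ x₂`,
`K_l ↦ K_l`, where `x₁x₂ = s x₂x₁`, `x₃x₂ = r x₂x₃`, `s x₁x₃ = r x₃x₁` (`feigin`). Injectivity
(`feigin_injective`) is a PBW argument: with `E₃ = E₁E₂ - sE₂E₁` the monomials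
`E₂ᵃE₃ᵇE₁ᶜK₁ᵐK₂ⁿ` span `V` (`span_pbw`), and their images have pairwise distinct leading terms with
respect to the degree in `x₁` (`isLead_pbw`).

The units of a quantum torus are the monomials, and the image of `V` contains only nonnegative powers
of the `x_i`, so a unit of `V` is a scalar multiple of some `K₁ᵐK₂ⁿ` (`feigin_unit`). Hence an
automorphism `θ` sends `K₁, K₂` to multiples of such monomials. Choose a monomial occurring in
`θ(E₁)` and one in `θ(E₂)`. Their weights under conjugation by `θ(K₁)` and `θ(K₂)` are those of `E₁`
and `E₂` under `K₁` and `K₂`; as `ρ` and `σ` are multiplicatively independent this is a system of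
equations between integer exponents (`weight_eq`). Since the degrees of the chosen monomials are
nonnegative, the only solution is `θ(K_l) ∈ ℂ* K_l` (`exponents_eq`); in particular the permutation
in the statement can always be taken to be the identity.
-/

noncomputable section

open FreeAlgebra

/-- The defining relations of the augmented Hopf algebra `Ǔ^{≥0}_{r,s}(sl₃)` (with
`r = ρ³`, `s = σ³`) as a quotient of the free algebra on six generators:
generator `0` is `E₁`, `1` is `E₂`, `2` is `K₁`, `3` is `K₁⁻¹`, `4` is `K₂`, `5` is `K₂⁻¹`. -/
inductive VRel (ρ σ : ℂ) : FreeAlgebra ℂ (Fin 6) → FreeAlgebra ℂ (Fin 6) → Prop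
  | k1inv : VRel ρ σ (ι ℂ (2 : Fin 6) * ι ℂ 3) 1
  | invk1 : VRel ρ σ (ι ℂ (3 : Fin 6) * ι ℂ 2) 1
  | k2inv : VRel ρ σ (ι ℂ (4 : Fin 6) * ι ℂ 5) 1
  | invk2 : VRel ρ σ (ι ℂ (5 : Fin 6) * ι ℂ 4) 1
  | k1k2 : VRel ρ σ (ι ℂ (2 : Fin 6) * ι ℂ 4) (ι ℂ (4 : Fin 6) * ι ℂ 2)
  | k1e1 : VRel ρ σ (ι ℂ (2 : Fin 6) * ι ℂ 0) ((ρ * (σ ^ 2)⁻¹) • (ι ℂ (0 : Fin 6) * ι ℂ 2))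
  | k1e2 : VRel ρ σ (ι ℂ (2 : Fin 6) * ι ℂ 1) ((ρ * σ) • (ι ℂ (1 : Fin 6) * ι ℂ 2))
  | k2e1 : VRel ρ σ (ι ℂ (4 : Fin 6) * ι ℂ 0) ((ρ⁻¹ * σ⁻¹) • (ι ℂ (0 : Fin 6) * ι ℂ 4))
  | k2e2 : VRel ρ σ (ι ℂ (4 : Fin 6) * ι ℂ 1) ((ρ ^ 2 * σ⁻¹) • (ι ℂ (1 : Fin 6) * ι ℂ 4))
  | serre1 : VRel ρ σ
      (ι ℂ (0 : Fin 6) * ι ℂ 0 * ι ℂ 1 - (ρ ^ 3 + σ ^ 3) • (ι ℂ (0 : Fin 6) * ι ℂ 1 * ι ℂ 0)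
        + (ρ ^ 3 * σ ^ 3) • (ι ℂ (1 : Fin 6) * ι ℂ 0 * ι ℂ 0)) 0
  | serre2 : VRel ρ σ
      (ι ℂ (0 : Fin 6) * ι ℂ 1 * ι ℂ 1 - (ρ ^ 3 + σ ^ 3) • (ι ℂ (1 : Fin 6) * ι ℂ 0 * ι ℂ 1)
        + (ρ ^ 3 * σ ^ 3) • (ι ℂ (1 : Fin 6) * ι ℂ 1 * ι ℂ 0)) 0

/-- The augmented Hopf algebra `Ǔ^{≥0}_{r,s}(sl₃)`. -/
abbrev Vsl3 (ρ σ : ℂ) := RingQuot (VRel ρ σ)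

def vE₁ (ρ σ : ℂ) : Vsl3 ρ σ := RingQuot.mkAlgHom ℂ (VRel ρ σ) (ι ℂ 0)
def vE₂ (ρ σ : ℂ) : Vsl3 ρ σ := RingQuot.mkAlgHom ℂ (VRel ρ σ) (ι ℂ 1)
def K₁ (ρ σ : ℂ) : Vsl3 ρ σ := RingQuot.mkAlgHom ℂ (VRel ρ σ) (ι ℂ 2)
def K₁inv (ρ σ : ℂ) : Vsl3 ρ σ := RingQuot.mkAlgHom ℂ (VRel ρ σ) (ι ℂ 3)
def K₂ (ρ σ : ℂ) : Vsl3 ρ σ := RingQuot.mkAlgHom ℂ (VRel ρ σ) (ι ℂ 4)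
def K₂inv (ρ σ : ℂ) : Vsl3 ρ σ := RingQuot.mkAlgHom ℂ (VRel ρ σ) (ι ℂ 5)
def vE₃ (ρ σ : ℂ) : Vsl3 ρ σ := vE₁ ρ σ * vE₂ ρ σ - σ ^ 3 • (vE₂ ρ σ * vE₁ ρ σ)

/-- Integer powers of `K₁`: for negative `m`, `K₁^m` means `(K₁⁻¹)^(-m)`. -/
def K₁z (ρ σ : ℂ) (m : ℤ) : Vsl3 ρ σ :=
  if 0 ≤ m then K₁ ρ σ ^ m.toNat else K₁inv ρ σ ^ (-m).toNat

/-- Integer powers of `K₂`: for negative `n`, `K₂^n` means `(K₂⁻¹)^(-n)`. -/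
def K₂z (ρ σ : ℂ) (n : ℤ) : Vsl3 ρ σ :=
  if 0 ≤ n then K₂ ρ σ ^ n.toNat else K₂inv ρ σ ^ (-n).toNat

/-- The pair of group-like generators `K₁, K₂` as a family indexed by `Fin 2`. -/
def Kvec (ρ σ : ℂ) : Fin 2 → Vsl3 ρ σ := ![K₁ ρ σ, K₂ ρ σ]

/-! ### Twisted group algebras -/

/-- A nowhere vanishing bicharacter `G × G → ℂ` on an additive group. -/
structure Bichar (G : Type) [AddCommGroup G] where
  /-- the underlying function -/
  f : G → G → ℂ
  add_left : ∀ a b c, f (a + b) c = f a c * f b c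
  add_right : ∀ a b c, f a (b + c) = f a b * f a c
  ne_zero : ∀ a b, f a b ≠ 0

/-- The twisted group algebra: the vector space with basis `X v`, `v ∈ G`, and the product
`X v * X w = χ v w • X (v + w)`. -/
def Twisted {G : Type} [AddCommGroup G] (_χ : Bichar G) : Type := G →₀ ℂ

namespace Twisted

variable {G : Type} [AddCommGroup G] {χ : Bichar G}

theorem bichar_zero_left (χ : Bichar G) (b : G) : χ.f 0 b = 1 := by
  have h := χ.add_left 0 0 b
  rw [add_zero] at h
  exact (mul_eq_left₀ (χ.ne_zero 0 b)).1 h.symm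

theorem bichar_zero_right (χ : Bichar G) (b : G) : χ.f b 0 = 1 := by
  have h := χ.add_right b 0 0
  rw [add_zero] at h
  exact (mul_eq_left₀ (χ.ne_zero b 0)).1 h.symm

instance : AddCommGroup (Twisted χ) := inferInstanceAs (AddCommGroup (G →₀ ℂ))
instance : Module ℂ (Twisted χ) := inferInstanceAs (Module ℂ (G →₀ ℂ))

/-- The basis element of degree `v`. -/
def X (χ : Bichar G) (v : G) : Twisted χ := Finsupp.single v (1 : ℂ)

/-- The coefficient of `X v`. -/
def coeff (v : G) : Twisted χ →ₗ[ℂ] ℂ := Finsupp.lapply v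

/-- The set of degrees with nonzero coefficient. -/
def supp (x : Twisted χ) : Finset G := Finsupp.support x

theorem mem_supp {x : Twisted χ} {v : G} : v ∈ supp x ↔ coeff v x ≠ 0 := Finsupp.mem_support_iff

theorem coeff_X (v w : G) [Decidable (v = w)] :
    coeff w (X χ v) = if v = w then 1 else 0 := by
  classical
  simp only [coeff, X]
  exact (Finsupp.single_apply).trans (by congr)

theorem ext_coeff {x y : Twisted χ} (h : ∀ v, coeff v x = coeff v y) : x = y := Finsupp.ext h

/-- The product as a bilinear map. -/
def mulL (χ : Bichar G) : Twisted χ →ₗ[ℂ] Twisted χ →ₗ[ℂ] Twisted χ :=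
  Finsupp.linearCombination ℂ fun a =>
    (Finsupp.linearCombination ℂ fun b => χ.f a b • X χ (a + b) : (G →₀ ℂ) →ₗ[ℂ] Twisted χ)

theorem mulL_X_X (a b : G) : mulL χ (X χ a) (X χ b) = χ.f a b • X χ (a + b) := by
  have h1 : mulL χ (X χ a) = (1 : ℂ) •
      (Finsupp.linearCombination ℂ fun b => χ.f a b • X χ (a + b) : (G →₀ ℂ) →ₗ[ℂ] Twisted χ) :=
    Finsupp.linearCombination_single ℂ _ _
  have h2 : (Finsupp.linearCombination ℂ fun b => χ.f a b • X χ (a + b) :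
      (G →₀ ℂ) →ₗ[ℂ] Twisted χ) (Finsupp.single b 1) = (1 : ℂ) • χ.f a b • X χ (a + b) :=
    Finsupp.linearCombination_single ℂ _ _
  rw [one_smul] at h1 h2
  rw [h1]
  exact h2

theorem eq_sum (x : Twisted χ) : x = ∑ a ∈ supp x, coeff a x • X χ a := by
  conv_lhs => rw [← Finsupp.sum_single (f := (x : G →₀ ℂ))]
  refine Finset.sum_congr rfl fun a _ => ?_
  simp only [X]
  exact (Finsupp.smul_single_one a _).symm

theorem induction_X {p : Twisted χ → Prop} (x : Twisted χ) (h0 : p 0)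
    (hadd : ∀ x y, p x → p y → p (x + y)) (hX : ∀ (c : ℂ) v, p (c • X χ v)) : p x := by
  rw [eq_sum x]
  exact Finset.sum_induction _ p hadd h0 fun a _ => hX _ _

instance : Mul (Twisted χ) := ⟨fun x y => mulL χ x y⟩
instance : One (Twisted χ) := ⟨X χ 0⟩

theorem mul_def (x y : Twisted χ) : x * y = mulL χ x y := rfl
theorem one_def : (1 : Twisted χ) = X χ 0 := rfl

theorem X_mul_X (a b : G) : X χ a * X χ b = χ.f a b • X χ (a + b) := mulL_X_X a b

instance : Ring (Twisted χ) where
  __ := (inferInstance : AddCommGroup (Twisted χ))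
  left_distrib x y z := by simp [mul_def]
  right_distrib x y z := by simp [mul_def]
  zero_mul x := by simp [mul_def]
  mul_zero x := by simp [mul_def]
  one_mul x := by
    refine induction_X (p := fun x => 1 * x = x) x (by simp [mul_def]) (fun x y hx hy => ?_)
      fun c v => ?_
    · rw [mul_def] at *; rw [map_add, hx, hy]
    · rw [mul_def, one_def, map_smul, mulL_X_X, bichar_zero_left, one_smul, zero_add]
  mul_one x := by
    refine induction_X (p := fun x => x * 1 = x) x (by simp [mul_def]) (fun x y hx hy => ?_)
      fun c v => ?_
    · rw [mul_def] at *; rw [map_add, LinearMap.add_apply, hx, hy]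
    · rw [mul_def, one_def, map_smul, LinearMap.smul_apply, mulL_X_X, bichar_zero_right,
        one_smul, add_zero]
  mul_assoc x y z := by
    simp only [mul_def]
    refine induction_X (p := fun x => mulL χ (mulL χ x y) z = mulL χ x (mulL χ y z)) x
      (by simp) (fun x y hx hy => ?_) fun c u => ?_
    · simp only [map_add, LinearMap.add_apply]; rw [hx, hy]
    refine induction_X (p := fun y => mulL χ (mulL χ _ y) z = mulL χ _ (mulL χ y z)) y
      (by simp) (fun x y hx hy => ?_) fun d v => ?_
    · simp only [map_add, LinearMap.add_apply]; rw [hx, hy]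
    refine induction_X (p := fun z => mulL χ (mulL χ _ _) z = mulL χ _ (mulL χ _ z)) z
      (by simp) (fun x y hx hy => ?_) fun e w => ?_
    · simp only [map_add]; rw [hx, hy]
    simp only [map_smul, LinearMap.smul_apply, mulL_X_X, smul_smul, χ.add_left, χ.add_right,
      add_assoc]
    congr 1
    ring

instance : Algebra ℂ (Twisted χ) :=
  Algebra.ofModule (fun c x y => by simp [mul_def]) (fun c x y => by simp [mul_def])

theorem coeff_mul [DecidableEq G] (x y : Twisted χ) (c : G) :
    coeff c (x * y) = ∑ a ∈ supp x, ∑ b ∈ supp y,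
      if a + b = c then coeff a x * coeff b y * χ.f a b else 0 := by
  conv_lhs => rw [eq_sum x, eq_sum y]
  rw [Finset.sum_mul_sum, map_sum]
  refine Finset.sum_congr rfl fun a _ => ?_
  rw [map_sum]
  refine Finset.sum_congr rfl fun b _ => ?_
  rw [smul_mul_smul_comm, X_mul_X, map_smul, map_smul, coeff_X]
  split_ifs <;> simp

theorem exists_of_coeff_mul {x y : Twisted χ} {c : G} (h : coeff c (x * y) ≠ 0) :
    ∃ a b, coeff a x ≠ 0 ∧ coeff b y ≠ 0 ∧ a + b = c := by
  classical
  rw [coeff_mul] at h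
  obtain ⟨a, ha, h⟩ := Finset.exists_ne_zero_of_sum_ne_zero h
  obtain ⟨b, hb, h⟩ := Finset.exists_ne_zero_of_sum_ne_zero h
  refine ⟨a, b, mem_supp.1 ha, mem_supp.1 hb, ?_⟩
  by_contra hne
  simp [hne] at h

/-- If `v + w` is attained only once as a sum of degrees, its coefficient does not cancel. -/
theorem coeff_mul_of_unique {x y : Twisted χ} {v w : G}
    (h : ∀ a b, coeff a x ≠ 0 → coeff b y ≠ 0 → a + b = v + w → a = v ∧ b = w) :
    coeff (v + w) (x * y) = coeff v x * coeff w y * χ.f v w := by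
  classical
  rw [coeff_mul, Finset.sum_eq_single v, Finset.sum_eq_single w]
  · simp
  · intro b hb hne
    rw [if_neg]
    exact fun e => hne (add_left_cancel e)
  · intro hw
    have : coeff w y = 0 := by simpa [mem_supp] using hw
    simp [this]
  · intro a ha hne
    refine Finset.sum_eq_zero fun b hb => if_neg fun e => ?_
    exact hne (h a b (mem_supp.1 ha) (mem_supp.1 hb) e).1
  · intro hv
    have : coeff v x = 0 := by simpa [mem_supp] using hv
    simp [this]

theorem coeff_X_mul (v w : G) (x : Twisted χ) :
    coeff (v + w) (X χ v * x) = χ.f v w * coeff w x := by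
  classical
  rw [coeff_mul_of_unique, coeff_X, if_pos rfl]
  · ring
  · intro a b ha _ h
    have : v = a := by by_contra hne; simp [coeff_X, hne] at ha
    subst this
    exact ⟨rfl, add_left_cancel h⟩

theorem coeff_mul_X (v w : G) (x : Twisted χ) :
    coeff (v + w) (x * X χ w) = χ.f v w * coeff v x := by
  classical
  rw [coeff_mul_of_unique, coeff_X, if_pos rfl]
  · ring
  · intro a b _ hb h
    have : w = b := by by_contra hne; simp [coeff_X, hne] at hb
    subst this
    exact ⟨add_right_cancel h, rfl⟩

instance : Nontrivial (Twisted χ) := ⟨1, 0, fun h => by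
  have := congrArg (coeff (0 : G)) h
  classical
  rw [one_def, coeff_X] at this
  simp at this⟩

/-- Over a group with two unique sums (such as `ℤⁿ`) the only units are the monomials. -/
theorem eq_monomial_of_mul_eq_one [TwoUniqueSums G] {x y : Twisted χ} (h : x * y = 1) :
    ∃ (c d : ℂ) (v : G), c ≠ 0 ∧ d ≠ 0 ∧ x = c • X χ v ∧ y = d • X χ (-v) := by
  classical
  have hx : (supp x).Nonempty := by
    rw [Finset.nonempty_iff_ne_empty]
    intro he
    rw [eq_sum x, he] at h
    simp at h
  have hy : (supp y).Nonempty := by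
    rw [Finset.nonempty_iff_ne_empty]
    intro he
    rw [eq_sum y, he] at h
    simp at h
  -- two distinct unique sums would put two different degrees in the support of `1`
  have key : ∀ p ∈ supp x ×ˢ supp y, UniqueAdd (supp x) (supp y) p.1 p.2 → p.1 + p.2 = 0 := by
    intro p hp hu
    rw [Finset.mem_product] at hp
    have h1 := coeff_mul_of_unique (x := x) (y := y) (v := p.1) (w := p.2)
      (fun a b ha hb e => hu (mem_supp.2 ha) (mem_supp.2 hb) e)
    rw [h, one_def, coeff_X] at h1
    by_contra hne
    rw [if_neg (fun e => hne e.symm)] at h1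
    exact mul_ne_zero (mul_ne_zero (mem_supp.1 hp.1) (mem_supp.1 hp.2)) (χ.ne_zero _ _) h1.symm
  have hcard : (supp x).card * (supp y).card ≤ 1 := by
    by_contra hlt
    obtain ⟨p, hp, p', hp', hne, hu, hu'⟩ :=
      TwoUniqueSums.uniqueAdd_of_one_lt_card (not_le.1 hlt)
    have e := (key p hp hu).trans (key p' hp' hu').symm
    rw [Finset.mem_product] at hp hp'
    obtain ⟨e1, e2⟩ := hu' hp.1 hp.2 e
    exact hne (Prod.ext e1 e2)
  have hx1 := hx.card_pos
  have hy1 := hy.card_pos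
  have hx2 : (supp x).card = 1 := by nlinarith
  have hy2 : (supp y).card = 1 := by nlinarith
  obtain ⟨v, hv⟩ := Finset.card_eq_one.1 hx2
  obtain ⟨w, hw⟩ := Finset.card_eq_one.1 hy2
  have hvw : v + w = 0 := by
    refine key (v, w) (by simp [hv, hw]) ?_
    intro a b ha hb _
    rw [hv] at ha; rw [hw] at hb
    exact ⟨Finset.mem_singleton.1 ha, Finset.mem_singleton.1 hb⟩
  refine ⟨coeff v x, coeff w y, v, mem_supp.1 (by simp [hv]), mem_supp.1 (by simp [hw]), ?_, ?_⟩
  · conv_lhs => rw [eq_sum x, hv]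
    simp
  · conv_lhs => rw [eq_sum y, hw]
    rw [← eq_neg_of_add_eq_zero_right hvw]
    simp

/-- `v` is the degree of the leading term of `x` for the additive function `l`: the coefficient
at `v` is nonzero and every other degree `e` of `x` satisfies `l e < l v`. -/
def IsLead (l : G →+ ℤ) (x : Twisted χ) (v : G) : Prop :=
  coeff v x ≠ 0 ∧ ∀ e, coeff e x ≠ 0 → l e < l v ∨ e = v

theorem isLead_X (l : G →+ ℤ) (v : G) : IsLead l (X χ v) v := by
  classical
  refine ⟨by simp [coeff_X], fun e he => Or.inr ?_⟩
  by_contra hne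
  rw [coeff_X, if_neg (fun h => hne h.symm)] at he
  exact he rfl

theorem IsLead.smul {l : G →+ ℤ} {x : Twisted χ} {v : G} (h : IsLead l x v) {c : ℂ}
    (hc : c ≠ 0) : IsLead l (c • x) v := by
  refine ⟨by simpa [hc] using h.1, fun e he => h.2 e ?_⟩
  rw [map_smul, smul_eq_mul] at he
  exact right_ne_zero_of_mul he

theorem IsLead.mul {l : G →+ ℤ} {x y : Twisted χ} {v w : G} (hx : IsLead l x v)
    (hy : IsLead l y w) : IsLead l (x * y) (v + w) := by
  constructor
  · rw [coeff_mul_of_unique]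
    · exact mul_ne_zero (mul_ne_zero hx.1 hy.1) (χ.ne_zero _ _)
    · intro a b ha hb e
      have e' := congrArg l e
      rw [map_add, map_add] at e'
      rcases hx.2 a ha with h | h <;> rcases hy.2 b hb with h' | h'
      · omega
      · rw [h'] at e'; omega
      · rw [h] at e'; omega
      · exact ⟨h, h'⟩
  · intro e he
    obtain ⟨a, b, ha, hb, rfl⟩ := exists_of_coeff_mul he
    rw [map_add, map_add]
    rcases hx.2 a ha with h | h <;> rcases hy.2 b hb with h' | h'
    · left; omega
    · left; rw [h']; omega
    · left; rw [h]; omega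
    · right; rw [h, h']

theorem IsLead.pow {l : G →+ ℤ} {x : Twisted χ} {v : G} (hx : IsLead l x v) (n : ℕ) :
    IsLead l (x ^ n) (n • v) := by
  induction n with
  | zero => simpa [one_def] using isLead_X l (0 : G)
  | succ n ih => rw [pow_succ, succ_nsmul]; exact ih.mul hx

/-- Elements with pairwise distinct leading degrees are linearly independent. -/
theorem linearIndependent_of_isLead {I : Type} (l : G →+ ℤ) (p : I → Twisted χ) (v : I → G)
    (hp : ∀ i, IsLead l (p i) (v i)) (hv : Function.Injective v) : LinearIndependent ℂ p := by
  rw [linearIndependent_iff]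
  intro g hg
  by_contra hne
  obtain ⟨i, hi, hmax⟩ := Finset.exists_max_image g.support (fun i => l (v i))
    (Finsupp.support_nonempty_iff.2 hne)
  have h := congrArg (coeff (v i)) hg
  rw [Finsupp.linearCombination_apply, Finsupp.sum, map_sum, Finset.sum_eq_single i] at h
  · rw [map_smul, smul_eq_mul, map_zero] at h
    exact mul_ne_zero (Finsupp.mem_support_iff.1 hi) (hp i).1 h
  · intro j hj hji
    rw [map_smul, smul_eq_mul]
    by_contra hc
    rcases (hp j).2 _ (right_ne_zero_of_mul hc) with h' | h'
    · exact absurd (hmax j hj) (not_le.2 h')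
    · exact hji (hv h'.symm)
  · intro h'; exact absurd hi h'

end Twisted

/-! ### The quantum torus and the embedding of `V` -/

open Twisted

/-- The exponent lattice of the quantum torus in `x₁, x₂, x₃, K₁, K₂` (in this order). -/
abbrev ExpLat := Fin 5 → ℤ

/-- The exponent of `ρ` in the bicharacter of the quantum torus. -/
def expR (a b : ExpLat) : ℤ :=
  a 3 * (b 0 + b 1 + b 2) + a 4 * (2 * b 1 - b 0 - b 2) + 3 * (a 0 * b 2 + a 2 * b 1)

/-- The exponent of `σ` in the bicharacter of the quantum torus. -/
def expS (a b : ExpLat) : ℤ :=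
  a 3 * (b 1 - 2 * (b 0 + b 2)) - a 4 * (b 0 + b 1 + b 2) + 3 * (a 0 * b 1 - a 0 * b 2)

section embedding

variable {ρ σ : ℂ} (hρ : ρ ≠ 0) (hσ : σ ≠ 0)

/-- The bicharacter for which `x₁x₂ = s x₂x₁`, `x₃x₂ = r x₂x₃`, `s x₁x₃ = r x₃x₁`, while `K₁, K₂`
commute with `x₁` and `x₃` as they do with `E₁`, and with `x₂` as they do with `E₂`. The
monomials are normally ordered as `x₂ x₃ x₁ K₁ K₂`. -/
def torusBichar : Bichar ExpLat where
  f a b := ρ ^ expR a b * σ ^ expS a b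
  add_left a b c := by
    have h1 : expR (a + b) c = expR a c + expR b c := by simp only [expR, Pi.add_apply]; ring
    have h2 : expS (a + b) c = expS a c + expS b c := by simp only [expS, Pi.add_apply]; ring
    rw [h1, h2, zpow_add₀ hρ, zpow_add₀ hσ]; ring
  add_right a b c := by
    have h1 : expR a (b + c) = expR a b + expR a c := by simp only [expR, Pi.add_apply]; ring
    have h2 : expS a (b + c) = expS a b + expS a c := by simp only [expS, Pi.add_apply]; ring
    rw [h1, h2, zpow_add₀ hρ, zpow_add₀ hσ]; ring
  ne_zero a b := mul_ne_zero (zpow_ne_zero _ hρ) (zpow_ne_zero _ hσ)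

/-- The quantum torus in `x₁, x₂, x₃, K₁, K₂`. -/
abbrev Torus := Twisted (torusBichar hρ hσ)

/-- The monomial with exponents `i, j, k, m, n` of `x₁, x₂, x₃, K₁, K₂`. -/
abbrev mon (i j k m n : ℤ) : Torus hρ hσ := X _ ![i, j, k, m, n]

theorem mon_mul (i j k m n i' j' k' m' n' : ℤ) :
    mon hρ hσ i j k m n * mon hρ hσ i' j' k' m' n' =
      (ρ ^ (m * (i' + j' + k') + n * (2 * j' - i' - k') + 3 * (i * k' + k * j')) *
        σ ^ (m * (j' - 2 * (i' + k')) - n * (i' + j' + k') + 3 * (i * j' - i * k'))) •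
      mon hρ hσ (i + i') (j + j') (k + k') (m + m') (n + n') := by
  rw [mon, mon, X_mul_X]
  congr 2
  simp

/-- Under `E₃ = E₁E₂ - sE₂E₁` the first Serre relation says that `E₁E₃ = rE₃E₁`. -/
theorem serre_one {A : Type} [Ring A] [Algebra ℂ A] (e f : A) (r s : ℂ) :
    e * e * f - (r + s) • (e * f * e) + (r * s) • (f * e * e) =
      e * (e * f - s • (f * e)) - r • ((e * f - s • (f * e)) * e) := by
  simp only [mul_sub, sub_mul, mul_smul_comm, smul_mul_assoc, smul_sub, add_smul, smul_smul,
    mul_assoc]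
  abel

/-- Under `E₃ = E₁E₂ - sE₂E₁` the second Serre relation says that `E₃E₂ = rE₂E₃`. -/
theorem serre_two {A : Type} [Ring A] [Algebra ℂ A] (e f : A) (r s : ℂ) :
    e * f * f - (r + s) • (f * e * f) + (r * s) • (f * f * e) =
      (e * f - s • (f * e)) * f - r • (f * (e * f - s • (f * e))) := by
  simp only [mul_sub, sub_mul, mul_smul_comm, smul_mul_assoc, smul_sub, add_smul, smul_smul,
    mul_assoc]
  abel

/-- The images of the six generators in the quantum torus. -/
def genImage : Fin 6 → Torus hρ hσ :=
  ![mon hρ hσ 1 0 0 0 0 + mon hρ hσ 0 0 1 0 0, mon hρ hσ 0 1 0 0 0, mon hρ hσ 0 0 0 1 0,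
    mon hρ hσ 0 0 0 (-1) 0, mon hρ hσ 0 0 0 0 1, mon hρ hσ 0 0 0 0 (-1)]

theorem mon_zero : mon hρ hσ 0 0 0 0 0 = 1 := by
  rw [one_def, mon]; congr 1; ext i; fin_cases i <;> rfl

theorem genImage_E₃ : genImage hρ hσ 0 * genImage hρ hσ 1 -
    σ ^ 3 • (genImage hρ hσ 1 * genImage hρ hσ 0) = (ρ ^ 3 - σ ^ 3) • mon hρ hσ 0 1 1 0 0 := by
  simp only [genImage, Matrix.cons_val, add_mul, mul_add, mon_mul]
  norm_num
  module

theorem genImage_rel {x y : FreeAlgebra ℂ (Fin 6)} (h : VRel ρ σ x y) :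
    FreeAlgebra.lift ℂ (genImage hρ hσ) x = FreeAlgebra.lift ℂ (genImage hρ hσ) y := by
  cases h
  case serre1 =>
    simp only [map_add, map_sub, map_mul, map_smul, FreeAlgebra.lift_ι_apply, map_zero]
    rw [serre_one, genImage_E₃]
    simp only [genImage, Matrix.cons_val, add_mul, mul_add, mul_smul_comm, smul_mul_assoc, mon_mul]
    norm_num [zpow_ofNat, zpow_neg]
    match_scalars <;> field_simp <;> ring
  case serre2 =>
    simp only [map_add, map_sub, map_mul, map_smul, FreeAlgebra.lift_ι_apply, map_zero]
    rw [serre_two, genImage_E₃]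
    simp only [genImage, Matrix.cons_val, mul_smul_comm, smul_mul_assoc, mon_mul]
    norm_num [zpow_ofNat, zpow_neg]
    match_scalars
    ring
  all_goals
    simp only [map_mul, map_smul, FreeAlgebra.lift_ι_apply, map_one, genImage, Matrix.cons_val,
      add_mul, mul_add, mon_mul]
    norm_num [zpow_ofNat, zpow_neg, mon_zero]

/-- The Feigin homomorphism `E₁ ↦ x₁ + x₃`, `E₂ ↦ x₂`, `K_l ↦ K_l` into the quantum torus. -/
def feigin : Vsl3 ρ σ →ₐ[ℂ] Torus hρ hσ :=
  RingQuot.liftAlgHom ℂ ⟨FreeAlgebra.lift ℂ (genImage hρ hσ), fun _ _ h => genImage_rel hρ hσ h⟩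

theorem feigin_gen (i : Fin 6) :
    feigin hρ hσ (RingQuot.mkAlgHom ℂ (VRel ρ σ) (ι ℂ i)) = genImage hρ hσ i := by
  rw [feigin, RingQuot.liftAlgHom_mkAlgHom_apply, FreeAlgebra.lift_ι_apply]

theorem feigin_K₁ : feigin hρ hσ (K₁ ρ σ) = mon hρ hσ 0 0 0 1 0 := feigin_gen hρ hσ 2
theorem feigin_K₂ : feigin hρ hσ (K₂ ρ σ) = mon hρ hσ 0 0 0 0 1 := feigin_gen hρ hσ 4
theorem feigin_E₁ : feigin hρ hσ (vE₁ ρ σ) = mon hρ hσ 1 0 0 0 0 + mon hρ hσ 0 0 1 0 0 :=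
  feigin_gen hρ hσ 0
theorem feigin_E₂ : feigin hρ hσ (vE₂ ρ σ) = mon hρ hσ 0 1 0 0 0 := feigin_gen hρ hσ 1
theorem feigin_E₃ : feigin hρ hσ (vE₃ ρ σ) = (ρ ^ 3 - σ ^ 3) • mon hρ hσ 0 1 1 0 0 := by
  rw [vE₃, map_sub, map_mul, map_smul, map_mul, vE₁, vE₂, feigin_gen, feigin_gen, genImage_E₃]

/-- The images of elements of `V` involve only nonnegative powers of `x₁, x₂, x₃`. -/
theorem feigin_nonneg (y : Vsl3 ρ σ) (e : ExpLat) (he : coeff e (feigin hρ hσ y) ≠ 0) :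
    0 ≤ e 0 ∧ 0 ≤ e 1 ∧ 0 ≤ e 2 := by
  obtain ⟨a, rfl⟩ := RingQuot.mkAlgHom_surjective ℂ (VRel ρ σ) y
  rw [feigin, RingQuot.liftAlgHom_mkAlgHom_apply] at he
  induction a using FreeAlgebra.induction generalizing e with
  | grade0 c =>
    rw [AlgHom.commutes, Algebra.algebraMap_eq_smul_one, map_smul, one_def, coeff_X] at he
    have h0 : (0 : ExpLat) = e := by by_contra hne; simp [hne] at he
    simp [← h0]
  | grade1 i =>
    have hX : ∀ v : ExpLat, coeff e (X (torusBichar hρ hσ) v) ≠ 0 → v = e := by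
      intro v hv
      by_contra hne
      simp [coeff_X, hne] at hv
    rw [FreeAlgebra.lift_ι_apply] at he
    fin_cases i
    · by_cases h : coeff e (mon hρ hσ 1 0 0 0 0) = 0
      · have := hX ![0, 0, 1, 0, 0] (by simpa [genImage, h] using he)
        subst this
        simp
      · have := hX _ h
        subst this
        simp
    all_goals
      simp only [genImage] at he
      have := hX _ he
      subst this
      simp
  | mul a b ha hb =>
    rw [map_mul] at he
    obtain ⟨u, v, hu, hv, rfl⟩ := exists_of_coeff_mul he
    have h1 := ha u hu
    have h2 := hb v hv
    simp only [Pi.add_apply]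
    omega
  | add a b ha hb =>
    rw [map_add, map_add] at he
    by_cases h : coeff e (FreeAlgebra.lift ℂ (genImage hρ hσ) a) = 0
    · rw [h, zero_add] at he; exact hb e he
    · exact ha e h

end embedding

/-! ### The PBW spanning set and injectivity -/

section pbw

variable {ρ σ : ℂ}

theorem K₁_mul_inv : K₁ ρ σ * K₁inv ρ σ = 1 := by
  simpa [K₁, K₁inv] using RingQuot.mkAlgHom_rel ℂ (VRel.k1inv (ρ := ρ) (σ := σ))
theorem K₁inv_mul : K₁inv ρ σ * K₁ ρ σ = 1 := by
  simpa [K₁, K₁inv] using RingQuot.mkAlgHom_rel ℂ (VRel.invk1 (ρ := ρ) (σ := σ))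
theorem K₂_mul_inv : K₂ ρ σ * K₂inv ρ σ = 1 := by
  simpa [K₂, K₂inv] using RingQuot.mkAlgHom_rel ℂ (VRel.k2inv (ρ := ρ) (σ := σ))
theorem K₂inv_mul : K₂inv ρ σ * K₂ ρ σ = 1 := by
  simpa [K₂, K₂inv] using RingQuot.mkAlgHom_rel ℂ (VRel.invk2 (ρ := ρ) (σ := σ))
theorem K₁_mul_K₂ : K₁ ρ σ * K₂ ρ σ = K₂ ρ σ * K₁ ρ σ := by
  simpa [K₁, K₂] using RingQuot.mkAlgHom_rel ℂ (VRel.k1k2 (ρ := ρ) (σ := σ))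
theorem K₁_mul_E₁ : K₁ ρ σ * vE₁ ρ σ = (ρ * (σ ^ 2)⁻¹) • (vE₁ ρ σ * K₁ ρ σ) := by
  simpa [K₁, vE₁] using RingQuot.mkAlgHom_rel ℂ (VRel.k1e1 (ρ := ρ) (σ := σ))
theorem K₁_mul_E₂ : K₁ ρ σ * vE₂ ρ σ = (ρ * σ) • (vE₂ ρ σ * K₁ ρ σ) := by
  simpa [K₁, vE₂] using RingQuot.mkAlgHom_rel ℂ (VRel.k1e2 (ρ := ρ) (σ := σ))
theorem K₂_mul_E₁ : K₂ ρ σ * vE₁ ρ σ = (ρ⁻¹ * σ⁻¹) • (vE₁ ρ σ * K₂ ρ σ) := by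
  simpa [K₂, vE₁] using RingQuot.mkAlgHom_rel ℂ (VRel.k2e1 (ρ := ρ) (σ := σ))
theorem K₂_mul_E₂ : K₂ ρ σ * vE₂ ρ σ = (ρ ^ 2 * σ⁻¹) • (vE₂ ρ σ * K₂ ρ σ) := by
  simpa [K₂, vE₂] using RingQuot.mkAlgHom_rel ℂ (VRel.k2e2 (ρ := ρ) (σ := σ))

theorem E₁_mul_E₃ : vE₁ ρ σ * vE₃ ρ σ = ρ ^ 3 • (vE₃ ρ σ * vE₁ ρ σ) := by
  have h := RingQuot.mkAlgHom_rel ℂ (VRel.serre1 (ρ := ρ) (σ := σ))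
  simp only [map_add, map_sub, map_mul, map_smul, map_zero] at h
  rw [serre_one] at h
  exact sub_eq_zero.1 h

theorem E₃_mul_E₂ : vE₃ ρ σ * vE₂ ρ σ = ρ ^ 3 • (vE₂ ρ σ * vE₃ ρ σ) := by
  have h := RingQuot.mkAlgHom_rel ℂ (VRel.serre2 (ρ := ρ) (σ := σ))
  simp only [map_add, map_sub, map_mul, map_smul, map_zero] at h
  rw [serre_two] at h
  exact sub_eq_zero.1 h

theorem E₁_mul_E₂ : vE₁ ρ σ * vE₂ ρ σ = σ ^ 3 • (vE₂ ρ σ * vE₁ ρ σ) + vE₃ ρ σ := by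
  rw [vE₃]; abel

/-- `k` and `x` commute up to a nonzero scalar. -/
def QComm {A : Type} [Ring A] [Algebra ℂ A] (k x : A) : Prop :=
  ∃ c : ℂ, c ≠ 0 ∧ k * x = c • (x * k)

namespace QComm

variable {A : Type} [Ring A] [Algebra ℂ A] {k x y : A}

theorem mul (hx : QComm k x) (hy : QComm k y) : QComm k (x * y) := by
  obtain ⟨c, hc, hx⟩ := hx
  obtain ⟨d, hd, hy⟩ := hy
  refine ⟨c * d, mul_ne_zero hc hd, ?_⟩
  rw [← mul_assoc, hx, smul_mul_assoc, mul_assoc, hy, mul_smul_comm, smul_smul, mul_assoc]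

theorem pow (hx : QComm k x) (n : ℕ) : QComm k (x ^ n) := by
  induction n with
  | zero => exact ⟨1, one_ne_zero, by simp⟩
  | succ n ih => rw [pow_succ]; exact ih.mul hx

theorem inv {k' : A} (h : QComm k x) (h1 : k * k' = 1) (h2 : k' * k = 1) : QComm k' x := by
  obtain ⟨c, hc, hx⟩ := h
  refine ⟨c⁻¹, inv_ne_zero hc, ?_⟩
  have : x * k = c⁻¹ • (k * x) := by rw [hx, smul_smul, inv_mul_cancel₀ hc, one_smul]
  calc k' * x = k' * (x * k) * k' := by rw [mul_assoc, mul_assoc, h1, mul_one]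
    _ = c⁻¹ • (x * k') := by
      rw [this, mul_smul_comm, ← mul_assoc, h2, one_mul, smul_mul_assoc]

end QComm

/-- `K₁` as a unit of `V`. -/
def uK₁ (ρ σ : ℂ) : (Vsl3 ρ σ)ˣ := ⟨K₁ ρ σ, K₁inv ρ σ, K₁_mul_inv, K₁inv_mul⟩

/-- `K₂` as a unit of `V`. -/
def uK₂ (ρ σ : ℂ) : (Vsl3 ρ σ)ˣ := ⟨K₂ ρ σ, K₂inv ρ σ, K₂_mul_inv, K₂inv_mul⟩

theorem commute_uK : Commute (uK₁ ρ σ) (uK₂ ρ σ) := Units.ext K₁_mul_K₂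

/-- The PBW monomial `E₂ᵃ E₃ᵇ E₁ᶜ K₁ᵐ K₂ⁿ`. -/
def pbw (ρ σ : ℂ) (i : ℕ × ℕ × ℕ × ℤ × ℤ) : Vsl3 ρ σ :=
  vE₂ ρ σ ^ i.1 * vE₃ ρ σ ^ i.2.1 * vE₁ ρ σ ^ i.2.2.1 *
    ((uK₁ ρ σ ^ i.2.2.2.1 * uK₂ ρ σ ^ i.2.2.2.2 : (Vsl3 ρ σ)ˣ) : Vsl3 ρ σ)

theorem E₁_mul_E₂_pow (a : ℕ) : ∃ c d : ℂ, vE₁ ρ σ * vE₂ ρ σ ^ a =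
    c • (vE₂ ρ σ ^ a * vE₁ ρ σ) + d • (vE₂ ρ σ ^ (a - 1) * vE₃ ρ σ) := by
  induction a with
  | zero => exact ⟨1, 0, by simp⟩
  | succ a ih =>
    obtain ⟨c, d, h⟩ := ih
    have h2 : d • (vE₂ ρ σ ^ (a - 1) * vE₃ ρ σ * vE₂ ρ σ) =
        (if a = 0 then d • (vE₃ ρ σ * vE₂ ρ σ) else
          (d * ρ ^ 3) • (vE₂ ρ σ ^ a * vE₃ ρ σ)) := by
      split_ifs with ha
      · simp [ha]
      · obtain ⟨a, rfl⟩ := Nat.exists_eq_succ_of_ne_zero ha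
        rw [mul_assoc, E₃_mul_E₂, mul_smul_comm, smul_smul, ← mul_assoc]
        simp [pow_succ]
    by_cases ha : a = 0
    · subst ha
      refine ⟨σ ^ 3, 1, ?_⟩
      simp [E₁_mul_E₂]
    · rw [if_neg ha] at h2
      refine ⟨c * σ ^ 3, c + d * ρ ^ 3, ?_⟩
      rw [pow_succ, ← mul_assoc, h, add_mul, smul_mul_assoc, smul_mul_assoc, h2,
        mul_assoc (vE₂ ρ σ ^ a), E₁_mul_E₂, mul_add, mul_smul_comm, ← mul_assoc, smul_add,
        smul_smul, add_smul, add_assoc, Nat.add_sub_cancel]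

theorem E₁_mul_E₃_pow (b : ℕ) :
    ∃ c : ℂ, vE₁ ρ σ * vE₃ ρ σ ^ b = c • (vE₃ ρ σ ^ b * vE₁ ρ σ) := by
  induction b with
  | zero => exact ⟨1, by simp⟩
  | succ b ih =>
    obtain ⟨c, h⟩ := ih
    refine ⟨c * ρ ^ 3, ?_⟩
    rw [pow_succ, ← mul_assoc, h, smul_mul_assoc, mul_assoc, E₁_mul_E₃, mul_smul_comm, smul_smul,
      mul_assoc]

/-- Left multiplication by a unit which quasi-commutes with `E₁` and `E₂`. -/
theorem unit_mul_pbw (u : (Vsl3 ρ σ)ˣ) (h1 : QComm (u : Vsl3 ρ σ) (vE₁ ρ σ))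
    (h2 : QComm (u : Vsl3 ρ σ) (vE₂ ρ σ)) (a b c : ℕ) (m n m' n' : ℤ)
    (hu : u * (uK₁ ρ σ ^ m * uK₂ ρ σ ^ n) = uK₁ ρ σ ^ m' * uK₂ ρ σ ^ n') :
    (u : Vsl3 ρ σ) * pbw ρ σ (a, b, c, m, n) ∈ Submodule.span ℂ (Set.range (pbw ρ σ)) := by
  have h3 : QComm (u : Vsl3 ρ σ) (vE₃ ρ σ) := by
    obtain ⟨x, hx, e1⟩ := h1
    obtain ⟨y, hy, e2⟩ := h2
    refine ⟨x * y, mul_ne_zero hx hy, ?_⟩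
    rw [vE₃, mul_sub, sub_mul, mul_smul_comm, ← mul_assoc, ← mul_assoc, e1, e2, smul_mul_assoc,
      smul_mul_assoc, mul_assoc, mul_assoc, e1, e2]
    simp only [mul_smul_comm, smul_mul_assoc, smul_sub, smul_smul, mul_assoc]
    congr 2
    ring
  obtain ⟨z, hz, e⟩ := ((h2.pow a).mul (h3.pow b)).mul (h1.pow c)
  have : (u : Vsl3 ρ σ) * pbw ρ σ (a, b, c, m, n) = z • pbw ρ σ (a, b, c, m', n') := by
    simp only [pbw]
    rw [← hu, Units.val_mul u, ← mul_assoc, e, smul_mul_assoc, ← mul_assoc]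
  rw [this]
  exact Submodule.smul_mem _ _ (Submodule.subset_span ⟨_, rfl⟩)

theorem E₁_mul_pbw (a b c : ℕ) (m n : ℤ) :
    vE₁ ρ σ * pbw ρ σ (a, b, c, m, n) ∈ Submodule.span ℂ (Set.range (pbw ρ σ)) := by
  obtain ⟨x, y, h⟩ := E₁_mul_E₂_pow (ρ := ρ) (σ := σ) a
  obtain ⟨z, h'⟩ := E₁_mul_E₃_pow (ρ := ρ) (σ := σ) b
  have : vE₁ ρ σ * pbw ρ σ (a, b, c, m, n) =
      (x * z) • pbw ρ σ (a, b, c + 1, m, n) + y • pbw ρ σ (a - 1, b + 1, c, m, n) := by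
    simp only [pbw]
    rw [← mul_assoc, ← mul_assoc, ← mul_assoc, h, add_mul, add_mul, add_mul, smul_mul_assoc,
      mul_assoc (vE₂ ρ σ ^ a), h', pow_succ' (vE₃ ρ σ), pow_succ' (vE₁ ρ σ)]
    simp only [mul_smul_comm, smul_mul_assoc, smul_smul, mul_assoc]
  rw [this]
  exact Submodule.add_mem _ (Submodule.smul_mem _ _ (Submodule.subset_span ⟨_, rfl⟩))
    (Submodule.smul_mem _ _ (Submodule.subset_span ⟨_, rfl⟩))

theorem gen_mul_pbw (hρ : ρ ≠ 0) (hσ : σ ≠ 0) (g : Fin 6) (i : ℕ × ℕ × ℕ × ℤ × ℤ) :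
    RingQuot.mkAlgHom ℂ (VRel ρ σ) (ι ℂ g) * pbw ρ σ i ∈
      Submodule.span ℂ (Set.range (pbw ρ σ)) := by
  obtain ⟨a, b, c, m, n⟩ := i
  have q11 : QComm (K₁ ρ σ) (vE₁ ρ σ) := ⟨_, by simp [hρ, hσ], K₁_mul_E₁⟩
  have q12 : QComm (K₁ ρ σ) (vE₂ ρ σ) := ⟨_, by simp [hρ, hσ], K₁_mul_E₂⟩
  have q21 : QComm (K₂ ρ σ) (vE₁ ρ σ) := ⟨_, by simp [hρ, hσ], K₂_mul_E₁⟩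
  have q22 : QComm (K₂ ρ σ) (vE₂ ρ σ) := ⟨_, by simp [hρ, hσ], K₂_mul_E₂⟩
  have hcomm (k : ℤ) : uK₂ ρ σ ^ k * uK₁ ρ σ ^ m = uK₁ ρ σ ^ m * uK₂ ρ σ ^ k :=
    ((commute_uK.zpow_zpow m k).eq).symm
  fin_cases g
  · exact E₁_mul_pbw a b c m n
  · refine Submodule.subset_span ⟨(a + 1, b, c, m, n), ?_⟩
    simp only [pbw, pow_succ', mul_assoc]
    rfl
  · refine unit_mul_pbw (uK₁ ρ σ) q11 q12 a b c m n (m + 1) n ?_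
    rw [← mul_assoc, zpow_add_one, ← zpow_one_add, add_comm, zpow_add_one]
  · refine unit_mul_pbw (uK₁ ρ σ)⁻¹ (q11.inv K₁_mul_inv K₁inv_mul)
      (q12.inv K₁_mul_inv K₁inv_mul) a b c m n (-1 + m) n ?_
    rw [← mul_assoc, zpow_add, zpow_neg_one]
  · refine unit_mul_pbw (uK₂ ρ σ) q21 q22 a b c m n m (1 + n) ?_
    have := hcomm 1
    rw [zpow_one] at this
    rw [← mul_assoc, this, mul_assoc, zpow_one_add]
  · refine unit_mul_pbw (uK₂ ρ σ)⁻¹ (q21.inv K₂_mul_inv K₂inv_mul)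
      (q22.inv K₂_mul_inv K₂inv_mul) a b c m n m (-1 + n) ?_
    have := hcomm (-1)
    rw [zpow_neg_one] at this
    rw [← mul_assoc, this, mul_assoc, zpow_add, zpow_neg_one]

theorem span_pbw (hρ : ρ ≠ 0) (hσ : σ ≠ 0) :
    Submodule.span ℂ (Set.range (pbw ρ σ)) = ⊤ := by
  set S := Submodule.span ℂ (Set.range (pbw ρ σ)) with hS
  have key : ∀ a : FreeAlgebra ℂ (Fin 6), ∀ y ∈ S,
      RingQuot.mkAlgHom ℂ (VRel ρ σ) a * y ∈ S := by
    intro a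
    induction a using FreeAlgebra.induction with
    | grade0 c =>
      intro y hy
      rw [AlgHom.commutes, ← Algebra.smul_def]
      exact S.smul_mem c hy
    | grade1 g =>
      intro y hy
      induction hy using Submodule.span_induction with
      | mem x hx =>
        obtain ⟨i, rfl⟩ := hx
        exact gen_mul_pbw hρ hσ g i
      | zero => rw [mul_zero]; exact S.zero_mem
      | add x y _ _ hx hy => rw [mul_add]; exact S.add_mem hx hy
      | smul c x _ hx => rw [mul_smul_comm]; exact S.smul_mem c hx
    | mul a b ha hb =>
      intro y hy
      rw [map_mul, mul_assoc]
      exact ha _ (hb _ hy)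
    | add a b ha hb =>
      intro y hy
      rw [map_add, add_mul]
      exact S.add_mem (ha _ hy) (hb _ hy)
  have h1 : (1 : Vsl3 ρ σ) ∈ S := Submodule.subset_span ⟨(0, 0, 0, 0, 0), by simp [pbw]⟩
  refine Submodule.eq_top_iff'.2 fun y => ?_
  obtain ⟨a, rfl⟩ := RingQuot.mkAlgHom_surjective ℂ (VRel ρ σ) y
  simpa using key a 1 h1

variable (hρ : ρ ≠ 0) (hσ : σ ≠ 0)

/-- The degree in `x₁`. -/
def degX₁ : ExpLat →+ ℤ := Pi.evalAddMonoidHom (fun _ => ℤ) 0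

theorem isLead_zpow (u : (Vsl3 ρ σ)ˣ) (v : ExpLat)
    (h : IsLead degX₁ (feigin hρ hσ u) v)
    (h' : IsLead degX₁ (feigin hρ hσ (u⁻¹ : (Vsl3 ρ σ)ˣ)) (-v)) (m : ℤ) :
    IsLead degX₁ (feigin hρ hσ (u ^ m : (Vsl3 ρ σ)ˣ)) (m • v) := by
  obtain ⟨n, rfl | rfl⟩ := m.eq_nat_or_neg
  · simpa using h.pow n
  · have := h'.pow n
    rw [← map_pow, ← Units.val_pow_eq_pow_val] at this
    simpa using this

/-- The leading degrees are pairwise distinct because `E₁, E₂, E₃` have leading terms `x₁`, `x₂`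
and a multiple of `x₂x₃`. -/
theorem isLead_pbw (hrs : ρ ^ 3 ≠ σ ^ 3) (i : ℕ × ℕ × ℕ × ℤ × ℤ) :
    IsLead degX₁ (feigin hρ hσ (pbw ρ σ i))
      ![(i.2.2.1 : ℤ), i.1 + i.2.1, i.2.1, i.2.2.2.1, i.2.2.2.2] := by
  obtain ⟨a, b, c, m, n⟩ := i
  have l1 : IsLead degX₁ (feigin hρ hσ (vE₁ ρ σ)) ![1, 0, 0, 0, 0] := by
    rw [feigin_E₁]
    refine ⟨by simp [coeff_X], fun e he => ?_⟩
    by_cases h : ![1, 0, 0, 0, 0] = e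
    · exact Or.inr h.symm
    · left
      have : ![0, 0, 1, 0, 0] = e := by
        by_contra h'
        simp [coeff_X, h, h'] at he
      subst this
      simp [degX₁]
  have l2 : IsLead degX₁ (feigin hρ hσ (vE₂ ρ σ)) ![0, 1, 0, 0, 0] := by
    rw [feigin_E₂]; exact isLead_X _ _
  have l3 : IsLead degX₁ (feigin hρ hσ (vE₃ ρ σ)) ![0, 1, 1, 0, 0] := by
    rw [feigin_E₃]; exact (isLead_X _ _).smul (sub_ne_zero.2 hrs)
  have k1 : IsLead degX₁ (feigin hρ hσ (uK₁ ρ σ)) ![0, 0, 0, 1, 0] := by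
    have := feigin_gen hρ hσ 2
    exact this ▸ isLead_X _ _
  have k1' : IsLead degX₁ (feigin hρ hσ ((uK₁ ρ σ)⁻¹ : (Vsl3 ρ σ)ˣ)) (-![0, 0, 0, 1, 0]) := by
    have := feigin_gen hρ hσ 3
    have e : (-![0, 0, 0, 1, 0] : ExpLat) = ![0, 0, 0, -1, 0] := by simp
    rw [e]
    exact this ▸ isLead_X _ _
  have k2 : IsLead degX₁ (feigin hρ hσ (uK₂ ρ σ)) ![0, 0, 0, 0, 1] := by
    have := feigin_gen hρ hσ 4
    exact this ▸ isLead_X _ _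
  have k2' : IsLead degX₁ (feigin hρ hσ ((uK₂ ρ σ)⁻¹ : (Vsl3 ρ σ)ˣ)) (-![0, 0, 0, 0, 1]) := by
    have := feigin_gen hρ hσ 5
    have e : (-![0, 0, 0, 0, 1] : ExpLat) = ![0, 0, 0, 0, -1] := by simp
    rw [e]
    exact this ▸ isLead_X _ _
  have := (((l2.pow a).mul (l3.pow b)).mul (l1.pow c)).mul
    ((isLead_zpow hρ hσ _ _ k1 k1' m).mul (isLead_zpow hρ hσ _ _ k2 k2' n))
  simp only [pbw, map_mul, map_pow, Units.val_mul]
  convert this using 1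
  simp

theorem feigin_injective (hrs : ρ ^ 3 ≠ σ ^ 3) : Function.Injective (feigin hρ hσ) := by
  have hli := linearIndependent_of_isLead degX₁ (fun i => feigin hρ hσ (pbw ρ σ i)) _
    (isLead_pbw hρ hσ hrs) (by
      rintro ⟨a, b, c, m, n⟩ ⟨a', b', c', m', n'⟩ h
      have h0 := congrFun h 0
      have h1 := congrFun h 1
      have h2 := congrFun h 2
      have h3 := congrFun h 3
      have h4 := congrFun h 4
      simp at h0 h1 h2 h3 h4
      simp only [Prod.mk.injEq]
      omega)
  rw [injective_iff_map_eq_zero]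
  intro y hy
  have hy' : y ∈ Submodule.span ℂ (Set.range (pbw ρ σ)) := by rw [span_pbw hρ hσ]; trivial
  obtain ⟨g, rfl⟩ := (Finsupp.mem_span_range_iff_exists_finsupp).1 hy'
  have : Finsupp.linearCombination ℂ (fun i => feigin hρ hσ (pbw ρ σ i)) g = 0 := by
    rw [Finsupp.linearCombination_apply, ← hy, map_finsuppSum]
    simp
  rw [linearIndependent_iff.1 hli g this, Finsupp.sum_zero_index]

end pbw

/-! ### Automorphisms -/

/-- The images of `E₁, E₂` have degrees `(A, B), (C, D)` and the images of `K₁, K₂` have exponents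
`(m, n), (p, q)`. Writing `M`, `P` for the two matrices, the weights satisfy `M F Pᵀ = F` for two
fixed matrices `F = F₁, F₂` with `F₁⁻¹F₂` of order three; so `P` commutes with the transpose of
`F₁⁻¹F₂`, and a nonnegative matrix with that property is scalar. The six of these eight equations
that do not involve both `(p, q)` and `(C, D)` suffice. -/
theorem exponents_eq {m n p q A B C D : ℤ} (hA : 0 ≤ A) (hB : 0 ≤ B) (hC : 0 ≤ C)
    (h1 : m * (A + B) + n * (2 * B - A) = 1) (h2 : m * (B - 2 * A) - n * (A + B) = -2)
    (h3 : p * (A + B) + q * (2 * B - A) = -1) (h4 : p * (B - 2 * A) - q * (A + B) = -1)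
    (h5 : m * (C + D) + n * (2 * D - C) = 1) (h6 : m * (D - 2 * C) - n * (C + D) = 1) :
    m = 1 ∧ n = 0 ∧ p = 0 ∧ q = 1 := by
  -- the two relations expressing that `P` commutes with the matrix of order three
  have e1 : A + 2 * C = D - B := by linear_combination D * h1 - B * h5 - A * h6 + C * h2
  have e2 : D + 2 * B = A - C := by
    linear_combination D * h2 - B * h6 + D * h1 - B * h5 + A * h5 - C * h1
  obtain rfl : B = 0 := by omega
  have hu : A * (m - n) = 1 := by linear_combination h1
  obtain rfl : A = 1 := Int.eq_one_of_mul_eq_one_right hA hu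
  omega

/-- The embedding sends units of `V` to monomials in `K₁, K₂`. -/
theorem feigin_unit {ρ σ : ℂ} (hρ : ρ ≠ 0) (hσ : σ ≠ 0) {x y : Vsl3 ρ σ} (h : x * y = 1) :
    ∃ (c : ℂ) (m n : ℤ), c ≠ 0 ∧ feigin hρ hσ x = c • mon hρ hσ 0 0 0 m n := by
  have h' : feigin hρ hσ x * feigin hρ hσ y = 1 := by rw [← map_mul, h, map_one]
  obtain ⟨c, d, v, hc, hd, hx, hy⟩ := eq_monomial_of_mul_eq_one h'
  have h1 := feigin_nonneg hρ hσ x v (by rw [hx]; simp [coeff_X, hc])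
  have h2 := feigin_nonneg hρ hσ y (-v) (by rw [hy]; simp [coeff_X, hd])
  simp only [Pi.neg_apply] at h2
  refine ⟨c, v 3, v 4, hc, ?_⟩
  rw [hx, mon]
  congr 2
  ext i
  fin_cases i
  · simp; omega
  · simp; omega
  · simp; omega
  · simp
  · simp

theorem zpow_exponents_eq {ρ σ : ℂ} (hρ : ρ ≠ 0) (hσ : σ ≠ 0)
    (hind : ∀ m n : ℤ, (ρ ^ 3) ^ m * (σ ^ 3) ^ n = 1 → m = 0 ∧ n = 0) {a b c d : ℤ}
    (h : ρ ^ a * σ ^ b = ρ ^ c * σ ^ d) : a = c ∧ b = d := by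
  have h1 : ρ ^ (a - c) * σ ^ (b - d) = 1 := by
    rw [zpow_sub₀ hρ, zpow_sub₀ hσ]
    field_simp
    exact h
  have h2 := hind (a - c) (b - d) (by
    rw [← zpow_natCast, ← zpow_natCast, zpow_comm ρ, zpow_comm σ, ← mul_zpow, h1, one_zpow])
  omega

/-- If `k` is a multiple of `K₁ᵐK₂ⁿ` and `kw = ρᵃσᵇ wk`, then every degree `e` of `w` has weight
`ρᵃσᵇ` under conjugation by `K₁ᵐK₂ⁿ`. -/
theorem weight_eq {ρ σ : ℂ} (hρ : ρ ≠ 0) (hσ : σ ≠ 0)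
    (hind : ∀ m n : ℤ, (ρ ^ 3) ^ m * (σ ^ 3) ^ n = 1 → m = 0 ∧ n = 0)
    {w k : Torus hρ hσ} {e : ExpLat} (he : coeff e w ≠ 0) {c : ℂ} (hc : c ≠ 0) {m n a b : ℤ}
    (hk : k = c • mon hρ hσ 0 0 0 m n) (h : k * w = (ρ ^ a * σ ^ b) • (w * k)) :
    m * ((e 0 + e 2) + e 1) + n * (2 * e 1 - (e 0 + e 2)) = a ∧
      m * (e 1 - 2 * (e 0 + e 2)) - n * ((e 0 + e 2) + e 1) = b := by
  have h1 := congrArg (coeff (![0, 0, 0, m, n] + e)) h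
  rw [hk, smul_mul_assoc, mul_smul_comm, map_smul, map_smul, map_smul, coeff_X_mul, add_comm,
    coeff_mul_X] at h1
  have h2 : (torusBichar hρ hσ).f e ![0, 0, 0, m, n] = 1 := by
    simp [torusBichar, expR, expS]
  have h3 : (torusBichar hρ hσ).f ![0, 0, 0, m, n] e = ρ ^ a * σ ^ b := by
    rw [h2] at h1
    simp only [smul_eq_mul] at h1
    have h4 : c * coeff e w ≠ 0 := mul_ne_zero hc he
    exact mul_right_cancel₀ h4 (by linear_combination h1)
  obtain ⟨h5, h6⟩ := zpow_exponents_eq hρ hσ hind h3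
  simp only [expR, expS, Matrix.cons_val] at h5 h6
  constructor <;> linarith

theorem exists_coeff_ne_zero {ρ σ : ℂ} (hρ : ρ ≠ 0) (hσ : σ ≠ 0) (hrs : ρ ^ 3 ≠ σ ^ 3)
    {w : Vsl3 ρ σ} (hw : w ≠ 0) : ∃ e, coeff e (feigin hρ hσ w) ≠ 0 := by
  by_contra! h
  exact hw (feigin_injective hρ hσ hrs (by rw [map_zero]; exact ext_coeff (by simpa using h)))

/-- any `ℂ`-algebra automorphism `θ` of `Ǔ^{≥0}_{r,s}(sl₃)` satisfies
`θ(K_l) = a_l K_{σ(l)}` for some permutation `σ` of `{1,2}` and scalars `a_l ∈ ℂ*`. -/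
theorem stmt6 (ρ σ : ℂ) (hρ : ρ ≠ 0) (hσ : σ ≠ 0)
    (hind : ∀ m n : ℤ, (ρ ^ 3) ^ m * (σ ^ 3) ^ n = 1 → m = 0 ∧ n = 0)
    (θ : Vsl3 ρ σ ≃ₐ[ℂ] Vsl3 ρ σ) :
    ∃ (τ : Equiv.Perm (Fin 2)) (a : Fin 2 → ℂ),
      (∀ l, a l ≠ 0) ∧ ∀ l, θ (Kvec ρ σ l) = a l • Kvec ρ σ (τ l) := by
  have hrs : ρ ^ 3 ≠ σ ^ 3 := by
    intro h
    have := hind 1 (-1) (by rw [h]; simp [hσ])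
    omega
  have hinj := feigin_injective hρ hσ hrs
  obtain ⟨c, m, n, hc, hk1⟩ := feigin_unit hρ hσ (x := θ (K₁ ρ σ)) (y := θ (K₁inv ρ σ))
    (by rw [← map_mul, K₁_mul_inv, map_one])
  obtain ⟨d, p, q, hd, hk2⟩ := feigin_unit hρ hσ (x := θ (K₂ ρ σ)) (y := θ (K₂inv ρ σ))
    (by rw [← map_mul, K₂_mul_inv, map_one])
  have hE1 : vE₁ ρ σ ≠ 0 := by
    intro h
    have := congrArg (coeff ![1, 0, 0, 0, 0]) (feigin_E₁ hρ hσ)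
    simp [h, coeff_X] at this
  have hE2 : vE₂ ρ σ ≠ 0 := by
    intro h
    have := congrArg (coeff ![0, 1, 0, 0, 0]) (feigin_E₂ hρ hσ)
    simp [h, coeff_X] at this
  obtain ⟨e, he⟩ := exists_coeff_ne_zero hρ hσ hrs
    ((map_ne_zero_iff θ θ.injective).2 hE1)
  obtain ⟨f, hf⟩ := exists_coeff_ne_zero hρ hσ hrs
    ((map_ne_zero_iff θ θ.injective).2 hE2)
  have hen := feigin_nonneg hρ hσ _ e he
  have hfn := feigin_nonneg hρ hσ _ f hf
  have push {k x : Vsl3 ρ σ} {l : ℂ} (a b : ℤ) (hl : l = ρ ^ a * σ ^ b)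
      (h : k * x = l • (x * k)) : feigin hρ hσ (θ k) * feigin hρ hσ (θ x) =
        (ρ ^ a * σ ^ b) • (feigin hρ hσ (θ x) * feigin hρ hσ (θ k)) := by
    rw [← hl, ← map_mul, ← map_mul, h, map_smul, map_smul, map_mul, map_mul]
  obtain ⟨h1, h2⟩ := weight_eq hρ hσ hind he hc hk1
    (push 1 (-2) (by simp [zpow_neg, zpow_ofNat]) K₁_mul_E₁)
  obtain ⟨h3, h4⟩ := weight_eq hρ hσ hind he hd hk2 (push (-1) (-1) (by simp) K₂_mul_E₁)
  obtain ⟨h5, h6⟩ := weight_eq hρ hσ hind hf hc hk1 (push 1 1 (by simp) K₁_mul_E₂)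
  obtain ⟨rfl, rfl, rfl, rfl⟩ := exponents_eq (by omega) hen.2.1 (by omega)
    h1 h2 h3 h4 h5 h6
  refine ⟨1, ![c, d], fun l => ?_, fun l => ?_⟩
  · fin_cases l <;> simp [hc, hd]
  · fin_cases l
    · exact hinj (by simpa [Kvec, feigin_K₁] using hk1)
    · exact hinj (by simpa [Kvec, feigin_K₂] using hk2)
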